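/- arXiv:2509.19559 — 2 statements merged into one kernel-verified Lean document; each statement's English description precedes it below -/
import Mathlib

section
/- Submodularity of Gaussian information gain (Proposition, part iii): With the linear–Gaussian sensing model, the set function I is submodular: for all subsets A ⊆ B ⊆ n and every index i ∈ n with i ∉ B, the marginal gains satisfy I(A ∪ {i}) − I(A) ≥ I(B ∪ {i}) − I(B), where I(A) = (1/2)·(log det(K_{AA}+Σ_A) − log det Σ_A). -/
open Matrix

/-- The information gain `I(A) = ½(log det(K_AA + Σ_A) − log det Σ_A)` of
observing the coordinates of a centered Gaussian vector with covariance `K`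
on the index set `A`, under independent per-index Gaussian sensor noise with
standard deviations `σ`. -/
noncomputable def infoGain {ι : Type*} [Fintype ι] [DecidableEq ι]
    (K : Matrix ι ι ℝ) (σ : ι → ℝ) (A : Finset ι) : ℝ :=
  (1 / 2) *
    (Real.log (Matrix.det
        (K.submatrix (fun a : A => (a : ι)) (fun a : A => (a : ι)) +
          Matrix.diagonal fun a : A => (σ (a : ι)) ^ 2)) -
      Real.log (Matrix.det (Matrix.diagonal fun a : A => (σ (a : ι)) ^ 2)))

/-!
Put `M = K + Σ`, the covariance of the noisy observations. The noise term `log det Σ_A` is additive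
in `A`, so only the submodularity of `A ↦ log det M_AA` is at stake. Adding `i` to `A` multiplies
`det M_AA` by the Schur complement `M_ii - M_iA M_AA⁻¹ M_Ai`, so this amounts to the fact that
observing more coordinates cannot increase the conditional variance of the `i`-th one. With `P` the
coordinate inclusion of `A` into `B` and `N = M_BB`, it is the inequality
`P (Pᴴ N P)⁻¹ Pᴴ ≤ N⁻¹` between positive semidefinite matrices, which holds because the difference
`D` of the two sides satisfies `D = D N D`.
-/

section Compression

variable {m n R : Type*} [Fintype m] [Fintype n] [DecidableEq m] [DecidableEq n] [CommRing R]

theorem nonsing_inv_mul_self_mul_nonsing_inv (S : Matrix n n R) : S⁻¹ * S * S⁻¹ = S⁻¹ := by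
  by_cases hS : IsUnit S.det
  · rw [nonsing_inv_mul S hS, Matrix.one_mul]
  · rw [nonsing_inv_apply_not_isUnit S hS, Matrix.mul_zero]

variable [PartialOrder R] [StarRing R]

theorem posSemidef_inv_sub_mul_inv_mul_conjTranspose {N : Matrix n n R} (hN : N.PosSemidef)
    (hunit : IsUnit N) (P : Matrix n m R) : (N⁻¹ - P * (Pᴴ * N * P)⁻¹ * Pᴴ).PosSemidef := by
  have hdet : IsUnit N.det := N.isUnit_iff_isUnit_det.1 hunit
  set Q := P * (Pᴴ * N * P)⁻¹ * Pᴴ with hQ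
  have hQ_herm : Qᴴ = Q :=
    isHermitian_mul_mul_conjTranspose P (isHermitian_conjTranspose_mul_mul P hN.isHermitian).inv
  have hQ_proj : Q * N * Q = Q :=
    calc
      Q * N * Q = P * ((Pᴴ * N * P)⁻¹ * (Pᴴ * N * P) * (Pᴴ * N * P)⁻¹) * Pᴴ := by
        simp only [hQ, Matrix.mul_assoc]
      _ = Q := by rw [nonsing_inv_mul_self_mul_nonsing_inv]
  have hfactor : N⁻¹ - Q = (N⁻¹ - Q)ᴴ * N * (N⁻¹ - Q) := by
    rw [conjTranspose_sub, hN.isHermitian.inv.eq, hQ_herm, Matrix.sub_mul, Matrix.sub_mul,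
      Matrix.mul_sub, Matrix.mul_sub, nonsing_inv_mul N hdet, Matrix.one_mul, Matrix.one_mul,
      mul_nonsing_inv_cancel_right N Q hdet, hQ_proj, sub_self, sub_zero]
  rw [hfactor]
  exact hN.conjTranspose_mul_mul_same _

theorem star_dotProduct_inv_submatrix_mulVec_le [IsOrderedAddMonoid R] {N : Matrix n n R}
    (hN : N.PosSemidef) (hunit : IsUnit N) (e : m → n) (b : n → R) :
    star (b ∘ e) ⬝ᵥ (N.submatrix e e)⁻¹ *ᵥ (b ∘ e) ≤ star b ⬝ᵥ N⁻¹ *ᵥ b := by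
  let P : Matrix n m R := (1 : Matrix n n R).submatrix (Equiv.refl n) e
  have hP : Pᴴ = (1 : Matrix n n R).submatrix e (Equiv.refl n) := by
    rw [conjTranspose_submatrix, conjTranspose_one]
  have hcompress : Pᴴ * N * P = N.submatrix e e := by
    rw [hP, one_submatrix_mul, mul_submatrix_one]
    rfl
  have hrestrict : Pᴴ *ᵥ b = b ∘ e := by
    rw [hP, submatrix_mulVec_equiv, one_mulVec]
    rfl
  have hquad : star b ⬝ᵥ (P * (Pᴴ * N * P)⁻¹ * Pᴴ) *ᵥ b =
      star (b ∘ e) ⬝ᵥ (N.submatrix e e)⁻¹ *ᵥ (b ∘ e) := by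
    rw [← hcompress, ← hrestrict, star_mulVec, conjTranspose_conjTranspose, ← dotProduct_mulVec,
      mulVec_mulVec, mulVec_mulVec]
  have hdiff :=
    (posSemidef_inv_sub_mul_inv_mul_conjTranspose hN hunit P).dotProduct_mulVec_nonneg b
  rwa [sub_mulVec, dotProduct_sub, hquad, sub_nonneg] at hdiff

end Compression

section SchurComplement

variable {ι R : Type*}

/-- The principal submatrix `M_AA` with rows and columns indexed by the finite set `A`. -/
abbrev principalSubmatrix (M : Matrix ι ι R) (A : Finset ι) : Matrix A A R :=
  M.submatrix Subtype.val Subtype.val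

variable [DecidableEq ι] [CommRing R]

/-- The Schur complement `M_ii - M_iA M_AA⁻¹ M_Ai` of `M_AA` in the principal submatrix on
`A ∪ {i}`. When `M` is the covariance of a Gaussian vector, it is the conditional variance of the
`i`-th coordinate given the coordinates in `A`. -/
noncomputable def schurCompl (M : Matrix ι ι R) (A : Finset ι) (i : ι) : R :=
  M i i - (fun a : A ↦ M i a) ⬝ᵥ (principalSubmatrix M A)⁻¹ *ᵥ (fun a : A ↦ M a i)

theorem det_principalSubmatrix_insert {M : Matrix ι ι R} {A : Finset ι} {i : ι} (hi : i ∉ A)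
    (hunit : IsUnit (principalSubmatrix M A)) :
    (principalSubmatrix M (insert i A)).det =
      (principalSubmatrix M A).det * schurCompl M A i := by
  let e : A ⊕ Unit ≃ (insert i A : Finset ι) :=
    ((Finset.subtypeInsertEquivOption hi).trans (Equiv.optionEquivSumPUnit A)).symm
  have hblock : (principalSubmatrix M (insert i A)).submatrix e e =
      fromBlocks (principalSubmatrix M A) (replicateCol Unit fun a : A ↦ M a i)
        (replicateRow Unit fun a : A ↦ M i a) (of fun _ _ ↦ M i i) := by
    ext (a | _) (b | _) <;> rfl
  let _ := hunit.invertible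
  rw [← det_submatrix_equiv_self e, hblock, det_fromBlocks₁₁, invOf_eq_nonsing_inv,
    Matrix.mul_assoc, det_unique (n := Unit), schurCompl]
  rfl

variable {𝕜 : Type*} [RCLike 𝕜] {M : Matrix ι ι 𝕜} {A B : Finset ι} {i : ι}

open scoped ComplexOrder

theorem schurCompl_pos (hM : M.PosDef) (hi : i ∉ A) : 0 < schurCompl M A i := by
  have hpos (C : Finset ι) : 0 < (principalSubmatrix M C).det :=
    (hM.submatrix Subtype.val_injective).det_pos
  have hprod := hpos (insert i A)
  rw [det_principalSubmatrix_insert hi (hM.submatrix Subtype.val_injective).isUnit] at hprod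
  exact (mul_pos_iff_of_pos_left (hpos A)).1 hprod

theorem schurCompl_anti (hM : M.PosDef) (hAB : A ⊆ B) (i : ι) :
    schurCompl M B i ≤ schurCompl M A i := by
  have hB : (principalSubmatrix M B).PosDef := hM.submatrix Subtype.val_injective
  have hrow (C : Finset ι) : (fun c : C ↦ M i c) = star fun c : C ↦ M c i :=
    funext fun c ↦ (hM.isHermitian.apply i c).symm
  rw [schurCompl, schurCompl, hrow, hrow]
  exact sub_le_sub_left (star_dotProduct_inv_submatrix_mulVec_le hB.posSemidef hB.isUnit
    (fun a : A ↦ (⟨a, hAB a.2⟩ : B)) fun b : B ↦ M b i) _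

end SchurComplement

section LogDet

variable {ι : Type*} [DecidableEq ι]

theorem log_det_principalSubmatrix_insert_sub {M : Matrix ι ι ℝ} (hM : M.PosDef) {A : Finset ι}
    {i : ι} (hi : i ∉ A) :
    Real.log (principalSubmatrix M (insert i A)).det - Real.log (principalSubmatrix M A).det =
      Real.log (schurCompl M A i) := by
  have hA : (principalSubmatrix M A).PosDef := hM.submatrix Subtype.val_injective
  rw [det_principalSubmatrix_insert hi hA.isUnit,
    Real.log_mul hA.det_pos.ne' (schurCompl_pos hM hi).ne', add_sub_cancel_left]

theorem log_det_principalSubmatrix_submodular {M : Matrix ι ι ℝ} (hM : M.PosDef)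
    {A B : Finset ι} (hAB : A ⊆ B) {i : ι} (hi : i ∉ B) :
    Real.log (principalSubmatrix M (insert i B)).det - Real.log (principalSubmatrix M B).det ≤
      Real.log (principalSubmatrix M (insert i A)).det - Real.log (principalSubmatrix M A).det := by
  rw [log_det_principalSubmatrix_insert_sub hM hi,
    log_det_principalSubmatrix_insert_sub hM (Finset.notMem_mono hAB hi)]
  exact Real.log_le_log (schurCompl_pos hM hi) (schurCompl_anti hM hAB i)

theorem infoGain_eq_log_det_sub_sum [Fintype ι] (K : Matrix ι ι ℝ) {σ : ι → ℝ} {A : Finset ι}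
    (hσ : ∀ a ∈ A, σ a ≠ 0) :
    infoGain K σ A = (1 / 2) *
      (Real.log (principalSubmatrix (K + diagonal (σ ^ 2)) A).det -
        ∑ a ∈ A, Real.log (σ a ^ 2)) := by
  have hnoise : diagonal (fun a : A ↦ σ a ^ 2) = principalSubmatrix (diagonal (σ ^ 2)) A :=
    (submatrix_diagonal (σ ^ 2) Subtype.val Subtype.val_injective).symm
  rw [infoGain, det_diagonal, Real.log_prod fun (a : A) _ ↦ pow_ne_zero 2 (hσ a a.2),
    Finset.sum_coe_sort A fun a ↦ Real.log (σ a ^ 2), hnoise]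
  rfl

end LogDet

/-- **Submodularity of Gaussian information gain.** If `K` is positive
semidefinite and all noise standard deviations are positive, then for all
index subsets `A ⊆ B` and every index `i ∉ B`, the marginal gains satisfy
`I(A ∪ {i}) − I(A) ≥ I(B ∪ {i}) − I(B)`. -/
theorem infoGain_submodular {ι : Type*} [Fintype ι] [DecidableEq ι]
    (K : Matrix ι ι ℝ) (σ : ι → ℝ)
    (hK : K.PosSemidef) (hσ : ∀ x : ι, 0 < σ x)
    (A B : Finset ι) (hAB : A ⊆ B) (i : ι) (hi : i ∉ B) :
    infoGain K σ (insert i A) - infoGain K σ A ≥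
      infoGain K σ (insert i B) - infoGain K σ B := by
  have hM : (K + diagonal (σ ^ 2)).PosDef :=
    PosDef.posSemidef_add hK (PosDef.diagonal fun x ↦ pow_pos (hσ x) 2)
  have hgain (C : Finset ι) := infoGain_eq_log_det_sub_sum K fun a (_ : a ∈ C) ↦ (hσ a).ne'
  have hlogdet := log_det_principalSubmatrix_submodular hM hAB hi
  rw [hgain, hgain, hgain, hgain, Finset.sum_insert hi,
    Finset.sum_insert (Finset.notMem_mono hAB hi)]
  linarith
end

section
/- Monotone decrease of Gaussian posterior variance under added observations: With the linear–Gaussian sensing model, for all subsets A ⊆ B ⊆ n and every index i ∈ n with i ∉ B, the posterior variances satisfy s_{i|B} ≤ s_{i|A}, where s_{i|A} := K_{ii} − K_{i,A}(K_{AA}+Σ_A)^{-1}K_{A,i}. -/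
open Matrix

/-- The posterior variance `s_{i|A} = K_ii − K_{i,A}(K_AA + Σ_A)⁻¹ K_{A,i}` of
the Gaussian coordinate `Y_i` given the noisy observations of the coordinates
in `A`, under independent per-index Gaussian sensor noise with standard
deviations `σ`. -/
noncomputable def postVar {ι : Type*} [Fintype ι] [DecidableEq ι]
    (K : Matrix ι ι ℝ) (σ : ι → ℝ) (A : Finset ι) (i : ι) : ℝ :=
  K i i -
    (fun a : A => K i (a : ι)) ⬝ᵥ
      ((K.submatrix (fun a : A => (a : ι)) (fun a : A => (a : ι)) +
          Matrix.diagonal fun a : A => (σ (a : ι)) ^ 2)⁻¹ *ᵥ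
        fun a : A => K (a : ι) i)

/-! The matrix `Bᴴ N⁻¹ B` is the least `D`, in the Löwner order, for which the block matrix
`[N B; Bᴴ D]` is positive semidefinite. Discarding rows and columns of `N`, and the corresponding
rows of `B`, preserves positive semidefiniteness of the block matrix, so it can only lower this
least `D`. With `N` the covariance of the observations and `B` their cross-covariance with `Y`, the
matrix `Bᴴ N⁻¹ B` is the reduction in the covariance of `Y` due to the observations; its diagonal
entries are the reductions in variance. -/

theorem posSemidef_conjTranspose_mul_inv_mul_sub_submatrix {k m n 𝕜 : Type*}
    [Fintype k] [DecidableEq k] [Fintype m] [DecidableEq m] [Finite n]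
    [Field 𝕜] [PartialOrder 𝕜] [StarRing 𝕜] [StarOrderedRing 𝕜]
    {N : Matrix m m 𝕜} (hN : N.PosDef) (B : Matrix m n 𝕜)
    {e : k → m} (he : Function.Injective e) :
    (Bᴴ * N⁻¹ * B -
      (B.submatrix e id)ᴴ * (N.submatrix e e)⁻¹ * B.submatrix e id).PosSemidef := by
  have hNe : (N.submatrix e e).PosDef := hN.submatrix he
  let _ := hN.isUnit.invertible
  let _ := hNe.isUnit.invertible
  have hblock : (fromBlocks N B Bᴴ (Bᴴ * N⁻¹ * B)).PosSemidef := by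
    rw [hN.fromBlocks₁₁, sub_self]
    exact .zero
  have hsub : (fromBlocks N B Bᴴ (Bᴴ * N⁻¹ * B)).submatrix (Sum.map e id) (Sum.map e id) =
      fromBlocks (N.submatrix e e) (B.submatrix e id) (B.submatrix e id)ᴴ (Bᴴ * N⁻¹ * B) := by
    ext (_ | _) (_ | _) <;> rfl
  rw [← hNe.fromBlocks₁₁, ← hsub]
  exact hblock.submatrix _

section Posterior

variable {ι : Type*} (K : Matrix ι ι ℝ) (σ : ι → ℝ) (A : Finset ι)

/-- The covariance `K_AA + Σ_A` of the noisy observations of the coordinates in `A`. -/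
def obsCov [DecidableEq ι] : Matrix A A ℝ :=
  K.submatrix (↑) (↑) + diagonal fun a : A => σ a ^ 2

/-- The posterior covariance `K − K_{·,A}(K_AA + Σ_A)⁻¹ K_{A,·}` of the whole Gaussian vector given
the noisy observations of the coordinates in `A`; the coordinates in `A` are kept as rows and
columns, since it is the noiseless `Y` that is being predicted. -/
noncomputable def posteriorCov [DecidableEq ι] : Matrix ι ι ℝ :=
  K - K.submatrix id ((↑) : A → ι) * (obsCov K σ A)⁻¹ * K.submatrix ((↑) : A → ι) id

theorem postVar_eq_posteriorCov_apply [Fintype ι] [DecidableEq ι] (i : ι) :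
    postVar K σ A i = posteriorCov K σ A i i := by
  rw [posteriorCov, Matrix.mul_assoc]
  rfl

variable {K σ A} [DecidableEq ι]

theorem posDef_obsCov (hK : K.PosSemidef) (hσ : ∀ x ∈ A, σ x ≠ 0) : (obsCov K σ A).PosDef :=
  .posSemidef_add (hK.submatrix _) <| .diagonal fun a => sq_pos_of_ne_zero (hσ a a.2)

theorem obsCov_submatrix {B : Finset ι} (hAB : A ⊆ B) :
    (obsCov K σ B).submatrix (Subtype.map id hAB) (Subtype.map id hAB) = obsCov K σ A := by
  rw [obsCov, submatrix_add, Pi.add_apply, Pi.add_apply,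
    submatrix_diagonal _ (Subtype.map id hAB) (Subtype.map_injective hAB Function.injective_id)]
  rfl

open scoped MatrixOrder in
theorem posteriorCov_antitone [Finite ι] (hK : K.IsHermitian) {B : Finset ι}
    (hB : (obsCov K σ B).PosDef) (hAB : A ⊆ B) : posteriorCov K σ B ≤ posteriorCov K σ A := by
  have hcross (C : Finset ι) :
      K.submatrix id ((↑) : C → ι) = (K.submatrix ((↑) : C → ι) id)ᴴ := by
    rw [conjTranspose_submatrix, hK.eq]
  have hrestrict : K.submatrix ((↑) : A → ι) id =
      (K.submatrix ((↑) : B → ι) id).submatrix (Subtype.map id hAB) id := rfl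
  rw [Matrix.le_iff, posteriorCov, posteriorCov, sub_sub_sub_cancel_left, hcross, hcross,
    ← obsCov_submatrix hAB, hrestrict]
  exact posSemidef_conjTranspose_mul_inv_mul_sub_submatrix hB _
    (Subtype.map_injective hAB Function.injective_id)

theorem postVar_antitone_general [Fintype ι] (hK : K.IsHermitian) {B : Finset ι}
    (hB : (obsCov K σ B).PosDef) (hAB : A ⊆ B) (i : ι) : postVar K σ B i ≤ postVar K σ A i := by
  rw [postVar_eq_posteriorCov_apply, postVar_eq_posteriorCov_apply, ← sub_nonneg]
  exact (Matrix.le_iff.mp (posteriorCov_antitone hK hB hAB)).diag_nonneg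

end Posterior

/-- **Monotone decrease of Gaussian posterior variance under added
observations.** If `K` is positive semidefinite and all noise standard
deviations are positive, then for all index subsets `A ⊆ B` and every index
`i ∉ B`, the posterior variances satisfy `s_{i|B} ≤ s_{i|A}`. -/
theorem postVar_antitone {ι : Type*} [Fintype ι] [DecidableEq ι]
    (K : Matrix ι ι ℝ) (σ : ι → ℝ)
    (hK : K.PosSemidef) (hσ : ∀ x : ι, 0 < σ x)
    (A B : Finset ι) (hAB : A ⊆ B) (i : ι) (hi : i ∉ B) :
    postVar K σ B i ≤ postVar K σ A i :=
  postVar_antitone_general hK.isHermitian (posDef_obsCov hK fun x _ => (hσ x).ne') hAB i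
end
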